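/- Let p be a prime and let μ : ℚ_p^× → ℂ^× be a group homomorphism (a character of ℚ_p^×, not assumed continuous or unramified) whose value at p satisfies the Kim–Shahidi bound p^(−5/34) < ‖μ(p)‖ < p^(5/34), where ‖·‖ denotes the complex absolute value. Then for all integers n ≥ 1, j with 1 ≤ j ≤ 2n, and i ∈ ℤ, the function x ↦ μ(x)·|x|_p^(−n+j−1/2) on ℚ_p^× is not equal to the function x ↦ |x|_p^i. (This is the key local step in the proof that the Duke–Imamoglu–Ikeda lift is not a theta lift: none of the characters μ_v |·|^(−n+j−1/2) occurring in the Bernstein–Zelevinsky data of the local component of the lift is of the form |·|^i with i an integer.) -/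

import Mathlib

/-!
Taking norms and then logarithms in `χ(x) · |x|^(k - 1/2) = |x|^i` at a single point `x` gives
`log ‖χ(x)‖ = (i - k + 1/2) · log |x|`. The factor `i - k + 1/2` is a half-integer, so it has
absolute value at least `1/2`, which forces `|log ‖χ(x)‖| ≥ |log |x|| / 2`. At `x = p` the
Kim–Shahidi bound says `|log ‖μ(p)‖| < (5/34) · log p`, and `5/34 < 1/2`.
-/

theorem half_le_abs_intCast_add_half {R : Type*} [Field R] [LinearOrder R] [IsStrictOrderedRing R]
    (m : ℤ) : 1 / 2 ≤ |(m : R) + 1 / 2| := by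
  rcases le_or_gt 0 m with hm | hm
  · have hm' : (0 : R) ≤ m := mod_cast hm
    exact le_abs.2 (.inl (by linarith))
  · have hm' : (m : R) ≤ -1 := mod_cast Int.le_sub_one_of_lt hm
    exact le_abs.2 (.inr (by linarith))

theorem norm_eq_rpow_sub_of_mul_rpow_eq {z : ℂ} {t a b : ℝ} (ht : 0 < t)
    (h : z * ((t ^ a : ℝ) : ℂ) = ((t ^ b : ℝ) : ℂ)) : ‖z‖ = t ^ (b - a) := by
  have hnorm : ‖z‖ * t ^ a = t ^ b := by
    simpa only [norm_mul, Complex.norm_of_nonneg (Real.rpow_nonneg ht.le _)] using congrArg norm h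
  rw [Real.rpow_sub ht, ← hnorm, mul_div_cancel_right₀ _ (Real.rpow_pos_of_pos ht a).ne']

theorem abs_log_lt_mul_log_iff {b y θ : ℝ} (hb : 0 < b) (hy : 0 < y) :
    |Real.log y| < θ * Real.log b ↔ b ^ (-θ) < y ∧ y < b ^ θ := by
  rw [abs_lt, ← neg_mul, Real.rpow_lt_iff_lt_log hb hy, Real.lt_rpow_iff_log_lt hy hb]

theorem abs_log_norm_padic_p (p : ℕ) [Fact p.Prime] :
    |Real.log ‖(p : ℚ_[p])‖| = Real.log p := by
  rw [Padic.norm_p, Real.log_inv, abs_neg, abs_of_nonneg (Real.log_natCast_nonneg p)]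

theorem abs_log_lt_half_abs_log_norm_padic_p {p : ℕ} [Fact p.Prime] {y θ : ℝ} (hθ : θ ≤ 1 / 2)
    (hlow : (p : ℝ) ^ (-θ) < y) (hhigh : y < (p : ℝ) ^ θ) :
    |Real.log y| < |Real.log ‖(p : ℚ_[p])‖| / 2 := by
  have hp : (0 : ℝ) < p := mod_cast (Fact.out : p.Prime).pos
  have hy : 0 < y := (Real.rpow_pos_of_pos hp _).trans hlow
  calc
    |Real.log y| < θ * Real.log p := (abs_log_lt_mul_log_iff hp hy).2 ⟨hlow, hhigh⟩
    _ ≤ 1 / 2 * Real.log p := by gcongr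
    _ = |Real.log ‖(p : ℚ_[p])‖| / 2 := by rw [abs_log_norm_padic_p, one_div_mul_eq_div]

theorem dii_local_char_ne_intPower_general {K : Type*} [NormedDivisionRing K] (χ : Kˣ → ℂˣ)
    (x : Kˣ) (hχ : |Real.log ‖(χ x : ℂ)‖| < |Real.log ‖(x : K)‖| / 2) (k i : ℤ) :
    (fun y : Kˣ => (χ y : ℂ) * ((‖(y : K)‖ ^ ((k : ℝ) - 1 / 2) : ℝ) : ℂ)) ≠
      (fun y : Kˣ => ((‖(y : K)‖ ^ (i : ℝ) : ℝ) : ℂ)) := by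
  intro h
  have hx : 0 < ‖(x : K)‖ := norm_pos_iff.2 x.ne_zero
  have hlog : Real.log ‖(χ x : ℂ)‖ = (((i - k : ℤ) : ℝ) + 1 / 2) * Real.log ‖(x : K)‖ := by
    rw [norm_eq_rpow_sub_of_mul_rpow_eq hx (congrFun h x), Real.log_rpow hx]
    push_cast
    ring
  refine hχ.not_ge ?_
  calc
    |Real.log ‖(x : K)‖| / 2 = 1 / 2 * |Real.log ‖(x : K)‖| := (one_div_mul_eq_div _ _).symm
    _ ≤ |((i - k : ℤ) : ℝ) + 1 / 2| * |Real.log ‖(x : K)‖| := by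
      gcongr
      exact half_le_abs_intCast_add_half _
    _ = |Real.log ‖(χ x : ℂ)‖| := by rw [hlog, abs_mul]

/-- **Key local step (unramified and ramified cases together).**
Let `p` be a prime and `μ : ℚ_p^× → ℂ^×` a character (group homomorphism, not assumed
continuous) whose value at `p` satisfies the Kim–Shahidi bound
`p^(−5/34) < ‖μ(p)‖ < p^(5/34)`.  Then for all integers `n ≥ 1`, `1 ≤ j ≤ 2n`, and
`i ∈ ℤ`, the function `x ↦ μ(x)·|x|_p^(−n+j−1/2)` on `ℚ_p^×` is not the function
`x ↦ |x|_p^i`.  Here `|·|_p = ‖·‖` is the `p`-adic absolute value with `|p|_p = p⁻¹`,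
and real powers are `rpow` of the (positive) real `|x|_p`, regarded in `ℂ`. -/
theorem dii_local_char_ne_intPower (p : ℕ) [Fact p.Prime]
    (μ : ℚ_[p]ˣ →* ℂˣ) (up : ℚ_[p]ˣ) (hup : (up : ℚ_[p]) = (p : ℚ_[p]))
    (hlow : (p : ℝ) ^ (-(5 : ℝ) / 34) < ‖(μ up : ℂ)‖)
    (hhigh : ‖(μ up : ℂ)‖ < (p : ℝ) ^ ((5 : ℝ) / 34))
    (n j : ℤ) (hn : 1 ≤ n) (hj1 : 1 ≤ j) (hj2 : j ≤ 2 * n) (i : ℤ) :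
    (fun x : ℚ_[p]ˣ =>
        (μ x : ℂ) * ((‖(x : ℚ_[p])‖ ^ (-(n : ℝ) + (j : ℝ) - 1 / 2) : ℝ) : ℂ)) ≠
      (fun x : ℚ_[p]ˣ => ((‖(x : ℚ_[p])‖ ^ ((i : ℤ) : ℝ) : ℝ) : ℂ)) := by
  have hμ := abs_log_lt_half_abs_log_norm_padic_p (by norm_num) (neg_div (34 : ℝ) 5 ▸ hlow) hhigh
  exact mod_cast dii_local_char_ne_intPower_general μ up (hup ▸ hμ) (-n + j) i
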